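/- Let $p$ be a prime and let $A \in M_n(\mathbb{Z}_p)$ with $\det A \neq 0$ and with at least one entry of $A$ a $p$-adic unit. Then there exist $V \in GL_n(\mathbb{Z}_p)$, $U \in GL_n(\mathbb{Z})$, and nonnegative integers $r_1 \geq r_2 \geq \cdots \geq r_{n-1} \geq 0$ such that $A = V D U$ where $D = \mathrm{diag}(p^{r_1}, \ldots, p^{r_{n-1}}, 1)$. -/

import Mathlib

def PP13 (p : ℕ) [Fact p.Prime] {ι : Type} [Fintype ι] [DecidableEq ι]
    (A : Matrix ι ι ℤ_[p]) : Prop :=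
  ∃ (V : Matrix ι ι ℤ_[p]) (U : Matrix ι ι ℤ) (r : ι → ℕ),
    IsUnit V ∧ IsUnit U ∧
    A = V * Matrix.diagonal (fun i => (p : ℤ_[p]) ^ r i) * U.map (Int.castRingHom ℤ_[p])

theorem PP13.submatrix {p : ℕ} [Fact p.Prime] {ι κ : Type} [Fintype ι] [DecidableEq ι]
    [Fintype κ] [DecidableEq κ] {A : Matrix ι ι ℤ_[p]} (h : PP13 p A) (e f : κ ≃ ι) :
    PP13 p (A.submatrix e f) := by
  obtain ⟨V, U, r, hV, hU, rfl⟩ := h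
  refine ⟨V.submatrix e e, U.submatrix e f, r ∘ e, ?_, ?_, ?_⟩
  · rwa [Matrix.isUnit_submatrix_equiv]
  · rwa [Matrix.isUnit_submatrix_equiv]
  · have h1 : Matrix.diagonal (fun i => (p : ℤ_[p]) ^ (r ∘ e) i)
        = (Matrix.diagonal (fun i => (p : ℤ_[p]) ^ r i)).submatrix e e := by
      rw [Matrix.submatrix_diagonal_equiv]; rfl
    rw [h1, Matrix.submatrix_mul_equiv, ← Matrix.submatrix_map, Matrix.submatrix_mul_equiv]

theorem PP13.smul {p : ℕ} [Fact p.Prime] {ι : Type} [Fintype ι] [DecidableEq ι]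
    {A : Matrix ι ι ℤ_[p]} (h : PP13 p A) (m : ℕ) : PP13 p ((p : ℤ_[p]) ^ m • A) := by
  obtain ⟨V, U, r, hV, hU, rfl⟩ := h
  refine ⟨V, U, fun i => m + r i, hV, hU, ?_⟩
  rw [← Matrix.smul_mul, ← Matrix.mul_smul]
  congr 2
  rw [← Matrix.diagonal_smul]
  congr 1
  ext i
  simp [pow_add]

theorem PP13.step {p : ℕ} [Fact p.Prime] {n : ℕ}
    (ih : ∀ C : Matrix (Fin n) (Fin n) ℤ_[p], C.det ≠ 0 → PP13 p C)
    (a : Matrix (Fin n) (Fin n) ℤ_[p]) (b : Matrix (Fin n) Unit ℤ_[p])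
    (c : Matrix Unit (Fin n) ℤ_[p]) (d : Matrix Unit Unit ℤ_[p]) (hd : IsUnit d)
    (hdet : (Matrix.fromBlocks a b c d).det ≠ 0) : PP13 p (Matrix.fromBlocks a b c d) := by
  obtain ⟨inst⟩ := hd.nonempty_invertible
  rw [Matrix.det_fromBlocks₂₂] at hdet
  obtain ⟨V, U, r, hV, hU, hC⟩ := ih _ (right_ne_zero_of_mul hdet)
  obtain ⟨U', hUU', hU'U⟩ := isUnit_iff_exists.1 hU
  set φ := Int.castRingHom ℤ_[p]
  set c'' : Matrix Unit (Fin n) ℤ_[p] := ⅟d * c * U'.map φ with hc''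
  have key : ∀ j, ∃ (z : ℤ) (w : ℤ_[p]), c'' () j = w * (p : ℤ_[p]) ^ r j + (z : ℤ_[p]) := by
    intro j
    have := PadicInt.appr_spec (r j) (c'' () j)
    obtain ⟨w, hw⟩ := Ideal.mem_span_singleton'.1 this
    refine ⟨((c'' () j).appr (r j) : ℕ), w, ?_⟩
    rw [hw]; push_cast; ring
  choose z w hzw using key
  let Z : Matrix Unit (Fin n) ℤ := fun _ j => z j
  let W : Matrix Unit (Fin n) ℤ_[p] := fun _ j => w j
  have hc2 : c'' = W * Matrix.diagonal (fun i => (p : ℤ_[p]) ^ r i) + Z.map φ := by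
    ext i j
    rw [Matrix.add_apply, Matrix.mul_diagonal]
    exact hzw j
  have hc3 : ⅟d * c = W * Matrix.diagonal (fun i => (p : ℤ_[p]) ^ r i) * U.map φ
      + (Z * U).map φ := by
    rw [Matrix.map_mul, ← Matrix.add_mul, ← hc2, hc'', Matrix.mul_assoc, ← Matrix.map_mul, hU'U]
    simp
  refine ⟨Matrix.fromBlocks 1 b 0 d * Matrix.fromBlocks V 0 W 1,
    Matrix.fromBlocks U 0 (Z * U) 1, Sum.elim r (fun _ => 0), ?_, ?_, ?_⟩
  · rw [Matrix.isUnit_iff_isUnit_det] at hd hV ⊢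
    simp [Matrix.det_fromBlocks_zero₁₂, Matrix.det_fromBlocks_zero₂₁, Matrix.det_mul, hd, hV] 
    simpa using hd
  · rw [Matrix.isUnit_iff_isUnit_det] at hU ⊢
    simpa [Matrix.det_fromBlocks_zero₁₂] using hU
  · have hD : Matrix.diagonal (fun i => (p : ℤ_[p]) ^ (Sum.elim r (fun _ : Unit => 0) i))
        = Matrix.fromBlocks (Matrix.diagonal (fun i => (p : ℤ_[p]) ^ r i)) 0 0 1 := by
      rw [← Matrix.diagonal_one, Matrix.fromBlocks_diagonal]
      congr 1
      ext i
      cases i <;> simp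
    rw [hD, Matrix.fromBlocks_map, Matrix.mul_assoc, Matrix.mul_assoc, ← Matrix.mul_assoc
      (Matrix.fromBlocks V 0 W 1), Matrix.fromBlocks_multiply, Matrix.fromBlocks_multiply,
      Matrix.map_zero _ (map_zero φ), Matrix.map_one _ (map_zero φ) (map_one φ)]
    simp only [Matrix.mul_zero, Matrix.zero_mul, Matrix.mul_one, Matrix.one_mul, add_zero,
      zero_add]
    rw [← hC, ← hc3, Matrix.fromBlocks_multiply]
    have h5 : d * (⅟d * c) = c := by rw [← Matrix.mul_assoc, mul_invOf_self, Matrix.one_mul]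
    have h6 : b * (⅟d * c) = b * ⅟d * c := by rw [Matrix.mul_assoc]
    rw [h5, h6]
    simp only [Matrix.mul_zero, Matrix.zero_mul, Matrix.mul_one, Matrix.one_mul, zero_add,
      sub_add_cancel]

theorem PP13.all {p : ℕ} [Fact p.Prime] {n : ℕ} :
    ∀ C : Matrix (Fin n) (Fin n) ℤ_[p], C.det ≠ 0 → PP13 p C := by
  induction n with
  | zero =>
    intro C _
    exact ⟨1, 1, 0, isUnit_one, isUnit_one, Subsingleton.elim _ _⟩
  | succ n ih =>
    intro A hA
    obtain ⟨⟨i₀, j₀⟩, hmax⟩ := Finite.exists_max (fun x : Fin (n+1) × Fin (n+1) => ‖A x.1 x.2‖)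
    have hne : A i₀ j₀ ≠ 0 := by
      intro h0
      apply hA
      have : A = 0 := by
        ext i j
        have := hmax (i, j)
        simp only [h0, norm_zero] at this
        simpa using this
      rw [this, Matrix.det_zero]
    set m := (A i₀ j₀).valuation with hm
    have hu := PadicInt.unitCoeff_spec hne
    have hdvd : ∀ i j, ∃ b, A i j = (p : ℤ_[p]) ^ m * b := by
      intro i j
      have h1 := hmax (i, j)
      simp only at h1
      rw [PadicInt.norm_eq_zpow_neg_valuation hne] at h1
      exact Ideal.mem_span_singleton.1 ((PadicInt.norm_le_pow_iff_mem_span_pow _ _).1 h1)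
    choose B hB using hdvd
    have hAB : A = (p : ℤ_[p]) ^ m • Matrix.of B := by
      ext i j; simp [hB i j]
    have hp : (p : ℤ_[p]) ^ m ≠ 0 := pow_ne_zero _ (by
      exact_mod_cast (Fact.out : p.Prime).ne_zero)
    have hBu : IsUnit (B i₀ j₀) := by
      have : B i₀ j₀ = PadicInt.unitCoeff hne := by
        apply mul_left_cancel₀ hp
        rw [← hB]; rw [mul_comm]; exact hu
      rw [this]; exact Units.isUnit _
    have hBd : (Matrix.of B).det ≠ 0 := by
      intro h
      apply hA
      rw [hAB, Matrix.det_smul, h, mul_zero]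
    rw [hAB]
    apply PP13.smul
    let e (k : Fin (n+1)) : Fin n ⊕ Unit ≃ Fin (n+1) :=
      (Equiv.optionEquivSumPUnit (Fin n)).symm.trans (finSuccEquiv' k).symm
    have he : ∀ k, e k (Sum.inr ()) = k := by
      intro k; simp [e]
    have h2 : PP13 p ((Matrix.of B).submatrix (e i₀) (e j₀)) := by
      have hd : ((Matrix.of B).submatrix (e i₀) (e j₀)).det ≠ 0 := by
        have : (Matrix.of B).submatrix (e i₀) (e j₀) =
            ((Matrix.of B).submatrix id ((e i₀).symm.trans (e j₀))).submatrix (e i₀) (e i₀) := by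
          ext; simp
        rw [this, Matrix.det_submatrix_equiv_self, Matrix.det_permute']
        refine mul_ne_zero ?_ hBd
        rcases Int.units_eq_one_or (Equiv.Perm.sign ((e i₀).symm.trans (e j₀))) with h | h <;>
          simp [h]
      rw [← Matrix.fromBlocks_toBlocks ((Matrix.of B).submatrix (e i₀) (e j₀))] at hd ⊢
      refine PP13.step ih _ _ _ _ ?_ hd
      rw [Matrix.isUnit_iff_isUnit_det]
      simpa [Matrix.toBlocks₂₂, he] using hBu
    have h3 := h2.submatrix (e i₀).symm (e j₀).symm
    simpa using h3

/-- Mixed local-global Smith normal form: if `A ∈ M_n(ℤ_p)` has nonzero determinant and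
some entry of `A` is a `p`-adic unit, then `A = V D U` with `V ∈ GL_n(ℤ_p)`,
`U ∈ GL_n(ℤ)` and `D = diag(p^{r_1}, …, p^{r_{n-1}}, 1)` with `r_1 ≥ … ≥ r_{n-1} ≥ 0`. -/
theorem stmt_13 (p : ℕ) [Fact p.Prime] (n : ℕ) (hn : 0 < n)
    (A : Matrix (Fin n) (Fin n) ℤ_[p]) (hA : A.det ≠ 0) (hunit : ∃ i j, IsUnit (A i j)) :
    ∃ (V : Matrix (Fin n) (Fin n) ℤ_[p]) (U : Matrix (Fin n) (Fin n) ℤ) (r : Fin n → ℕ),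
      IsUnit V.det ∧ IsUnit U.det ∧ Antitone r ∧ r ⟨n - 1, by omega⟩ = 0 ∧
      A = V * Matrix.diagonal (fun i => (p : ℤ_[p]) ^ r i)
            * U.map (fun x : ℤ => (x : ℤ_[p])) := by
  obtain ⟨V, U, r, hV, hU, h⟩ := PP13.all A hA
  let g : Equiv.Perm (Fin n) := Fin.revPerm.trans (Tuple.sort r)
  have hanti : Antitone (r ∘ g) := by
    intro i j hij
    exact Tuple.monotone_sort r (Fin.rev_le_rev.2 hij)
  have hA' : A = V.submatrix id g * Matrix.diagonal (fun i => (p : ℤ_[p]) ^ (r ∘ g) i)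
            * (U.submatrix g id).map (fun x : ℤ => (x : ℤ_[p])) := by
    have h1 : Matrix.diagonal (fun i => (p : ℤ_[p]) ^ (r ∘ g) i)
        = (Matrix.diagonal (fun i => (p : ℤ_[p]) ^ r i)).submatrix g g := by
      rw [Matrix.submatrix_diagonal_equiv]; rfl
    rw [h1, Matrix.submatrix_mul_equiv, ← Matrix.submatrix_map, Matrix.submatrix_mul_equiv]
    exact h
  refine ⟨V.submatrix id g, U.submatrix g id, r ∘ g, ?_, ?_, hanti, ?_, hA'⟩
  · rw [← Matrix.isUnit_iff_isUnit_det]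
    exact (Matrix.isUnit_submatrix_equiv (Equiv.refl _) g).2 hV
  · rw [← Matrix.isUnit_iff_isUnit_det]
    exact (Matrix.isUnit_submatrix_equiv g (Equiv.refl _)).2 hU
  · by_contra h0
    obtain ⟨i, j, hij⟩ := hunit
    have hall : ∀ k, (p : ℤ_[p]) ∣ (p : ℤ_[p]) ^ (r ∘ g) k := by
      intro k
      apply dvd_pow_self
      have : (r ∘ g) ⟨n - 1, by omega⟩ ≤ (r ∘ g) k := hanti (Fin.le_def.2 (by simp; omega))
      omega
    have hd : (p : ℤ_[p]) ∣ A i j := by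
      rw [hA', Matrix.mul_apply]
      refine Finset.dvd_sum fun k _ => ?_
      rw [Matrix.mul_diagonal]
      exact Dvd.dvd.mul_right (Dvd.dvd.mul_left (hall k) _) _
    exact PadicInt.prime_p.not_isUnit (isUnit_of_dvd_unit hd hij)
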